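/- Let b ∈ GL_n(E) be an invertible block upper-triangular matrix (i.e. b ∈ 𝔭_{S_0} and b is invertible). Then: (i) 𝔭_{S_0} ∩ Ad_b(𝔟̄) = Ad_b(𝔩_{S_0} ∩ 𝔟̄); (ii) (𝔷_{S_0} + 𝔫_{S_0}) ∩ Ad_b(𝔟̄) = Ad_b(𝔷_{S_0}). Equivalently, for g = b w_0 one has 𝔭_{S_0} ∩ Ad_g(𝔟) = Ad_b(𝔩_{S_0} ∩ 𝔟̄) and (𝔷_{S_0} + 𝔫_{S_0}) ∩ Ad_g(𝔟) = Ad_b(𝔷_{S_0}). (These are the intersection formulas at a non-critical point: Ad_u(𝔭_{S_0,σ}) ∩ Ad_{g_σ}(𝔟_σ) = Ad_{u b_σ(u)}(𝔩_{S_0,σ} ∩ 𝔟̄_σ) and Ad_u(τ_{S_0,σ}) ∩ Ad_{g_σ}(𝔟_σ) = Ad_{u b_σ(u)}(𝔷_{S_0,σ}).) -/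

import Mathlib

open Matrix

/-- The `E`-subspace of `n × n` matrices supported on the entries `(i, j)` where `P i j` holds. -/
def entrySub (E : Type*) [Field E] (n : ℕ) (P : Fin n → Fin n → Prop) :
    Submodule E (Matrix (Fin n) (Fin n) E) where
  carrier := {M | ∀ i j, ¬ P i j → M i j = 0}
  add_mem' := by
    intro M N hM hN i j hij
    simp only [Matrix.add_apply, hM i j hij, hN i j hij, add_zero]
  zero_mem' := by
    intro i j _
    simp
  smul_mem' := by
    intro c M hM i j hij
    simp only [Matrix.smul_apply, hM i j hij, smul_zero]

/-- The Borel subalgebra `𝔟` of upper-triangular matrices. -/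
def upperTri (E : Type*) [Field E] (n : ℕ) : Submodule E (Matrix (Fin n) (Fin n) E) :=
  entrySub E n fun i j => i ≤ j

/-- The opposite Borel subalgebra `𝔟̄` of lower-triangular matrices. -/
def lowerTri (E : Type*) [Field E] (n : ℕ) : Submodule E (Matrix (Fin n) (Fin n) E) :=
  entrySub E n fun i j => j ≤ i

/-- `𝔭_{S_0} = {M : M_{mk} = 0 whenever β(m) > β(k)}`, the standard block upper-triangular
(parabolic) subalgebra. -/
def parab (E : Type*) [Field E] {n s : ℕ} (β : Fin n → Fin s) :
    Submodule E (Matrix (Fin n) (Fin n) E) :=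
  entrySub E n fun i j => β i ≤ β j

/-- `𝔩_{S_0} = {M : M_{mk} = 0 whenever β(m) ≠ β(k)}`, the block-diagonal (Levi) subalgebra. -/
def levi (E : Type*) [Field E] {n s : ℕ} (β : Fin n → Fin s) :
    Submodule E (Matrix (Fin n) (Fin n) E) :=
  entrySub E n fun i j => β i = β j

/-- `𝔫_{S_0} = {M : M_{mk} = 0 unless β(m) < β(k)}`, the nilpotent radical of `𝔭_{S_0}`. -/
def nilrad (E : Type*) [Field E] {n s : ℕ} (β : Fin n → Fin s) :
    Submodule E (Matrix (Fin n) (Fin n) E) :=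
  entrySub E n fun i j => β i < β j

/-- The linear map `(c : Fin s → E) ↦ diagonal (c ∘ β)`. -/
def blockDiagMap (E : Type*) [Field E] {n s : ℕ} (β : Fin n → Fin s) :
    (Fin s → E) →ₗ[E] Matrix (Fin n) (Fin n) E where
  toFun c := Matrix.diagonal fun m => c (β m)
  map_add' c c' := by
    ext i j
    by_cases h : i = j <;>
      simp [Matrix.diagonal_apply, Matrix.add_apply, h]
  map_smul' t c := by
    ext i j
    by_cases h : i = j <;>
      simp [Matrix.diagonal_apply, Matrix.smul_apply, h]

/-- `𝔷_{S_0}`, the diagonal matrices whose diagonal entries are constant on each block. -/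
def centerLevi (E : Type*) [Field E] {n s : ℕ} (β : Fin n → Fin s) :
    Submodule E (Matrix (Fin n) (Fin n) E) :=
  LinearMap.range (blockDiagMap E β)

/-- `Ad_g(W) = g W g⁻¹`. -/
noncomputable def adConj {E : Type*} [Field E] {n : ℕ} (g : Matrix (Fin n) (Fin n) E)
    (W : Submodule E (Matrix (Fin n) (Fin n) E)) : Submodule E (Matrix (Fin n) (Fin n) E) :=
  W.map ((LinearMap.mulLeft E g).comp (LinearMap.mulRight E g⁻¹))

/-- The antidiagonal permutation matrix `w₀`, with `(w₀)_{m, n+1−m} = 1`. -/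
def w0Mat (E : Type*) [Field E] (n : ℕ) : Matrix (Fin n) (Fin n) E :=
  Matrix.of fun i j => if j = i.rev then 1 else 0

theorem mem_entrySub' {E : Type*} [Field E] {n : ℕ} {P : Fin n → Fin n → Prop}
    {M : Matrix (Fin n) (Fin n) E} : M ∈ entrySub E n P ↔ ∀ i j, ¬ P i j → M i j = 0 := Iff.rfl

theorem mem_adConj' {E : Type*} [Field E] {n : ℕ} {g : Matrix (Fin n) (Fin n) E}
    {W : Submodule E (Matrix (Fin n) (Fin n) E)} {M : Matrix (Fin n) (Fin n) E} :
    M ∈ adConj g W ↔ ∃ L ∈ W, g * (L * g⁻¹) = M := by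
  simp [adConj, Submodule.mem_map]

theorem parab_mul' {E : Type*} [Field E] {n s : ℕ} {β : Fin n → Fin s}
    {A B : Matrix (Fin n) (Fin n) E} (hA : A ∈ parab E β) (hB : B ∈ parab E β) :
    A * B ∈ parab E β := by
  intro i j hij
  rw [Matrix.mul_apply]
  refine Finset.sum_eq_zero fun k _ => ?_
  by_cases h : β i ≤ β k
  · rw [hB k j (fun h' => hij (h.trans h')), mul_zero]
  · rw [hA i k h, zero_mul]

theorem parab_mul_nilrad' {E : Type*} [Field E] {n s : ℕ} {β : Fin n → Fin s}
    {A B : Matrix (Fin n) (Fin n) E} (hA : A ∈ parab E β) (hB : B ∈ nilrad E β) :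
    A * B ∈ nilrad E β := by
  intro i j hij
  rw [Matrix.mul_apply]
  refine Finset.sum_eq_zero fun k _ => ?_
  by_cases h : β i ≤ β k
  · rw [hB k j (fun h' => hij (lt_of_le_of_lt h h')), mul_zero]
  · rw [hA i k h, zero_mul]

theorem nilrad_mul_parab' {E : Type*} [Field E] {n s : ℕ} {β : Fin n → Fin s}
    {A B : Matrix (Fin n) (Fin n) E} (hA : A ∈ nilrad E β) (hB : B ∈ parab E β) :
    A * B ∈ nilrad E β := by
  intro i j hij
  rw [Matrix.mul_apply]
  refine Finset.sum_eq_zero fun k _ => ?_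
  by_cases h : β i < β k
  · rw [hB k j (fun h' => hij (lt_of_lt_of_le h h')), mul_zero]
  · rw [hA i k h, zero_mul]

theorem parab_inv' {E : Type*} [Field E] {n s : ℕ} {β : Fin n → Fin s}
    {b : Matrix (Fin n) (Fin n) E} (hu : IsUnit b.det) (hb : b ∈ parab E β) :
    b⁻¹ ∈ parab E β := by
  have : Invertible b := Matrix.invertibleOfIsUnitDet b hu
  have h : Matrix.BlockTriangular b β := fun i j hij => hb i j (not_le.mpr hij)
  have h2 := Matrix.blockTriangular_inv_of_blockTriangular h
  exact fun i j hij => h2 (not_le.mp hij)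

theorem conj_center' {E : Type*} [Field E] {n s : ℕ} {β : Fin n → Fin s}
    {a a' z : Matrix (Fin n) (Fin n) E} (haa : a * a' = 1) (ha : a ∈ parab E β)
    (ha' : a' ∈ parab E β) (hz : z ∈ centerLevi E β ⊔ nilrad E β) :
    a * (z * a') ∈ centerLevi E β ⊔ nilrad E β := by
  obtain ⟨y, ⟨c, rfl⟩, N, hN, rfl⟩ := Submodule.mem_sup.mp hz
  refine Submodule.mem_sup.mpr ⟨blockDiagMap E β c, ⟨c, rfl⟩,
    (a * blockDiagMap E β c - blockDiagMap E β c * a) * a' + a * (N * a'), ?_, ?_⟩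
  · refine add_mem (nilrad_mul_parab' ?_ ha') (parab_mul_nilrad' ha (nilrad_mul_parab' hN ha'))
    intro i j hij
    simp only [blockDiagMap, LinearMap.coe_mk, AddHom.coe_mk, Matrix.sub_apply,
      Matrix.mul_diagonal, Matrix.diagonal_mul]
    by_cases h : β i = β j
    · rw [h]; ring
    · rw [ha i j (fun h' => hij (lt_of_le_of_ne h' h))]; ring
  · rw [sub_mul, mul_assoc (blockDiagMap E β c), haa]
    noncomm_ring

theorem w0_sq' (E : Type*) [Field E] (n : ℕ) : w0Mat E n * w0Mat E n = 1 := by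
  ext i j
  have : ∀ k : Fin n, (j = k.rev) ↔ (k = j.rev) := fun k => by
    rw [eq_comm, Fin.rev_eq_iff]
  simp [w0Mat, Matrix.mul_apply, Matrix.one_apply, this, eq_comm (a := i)]

theorem w0_conj' {E : Type*} [Field E] {n : ℕ} (U : Matrix (Fin n) (Fin n) E) (i j : Fin n) :
    (w0Mat E n * (U * w0Mat E n)) i j = U i.rev j.rev := by
  have : ∀ k : Fin n, (j = k.rev) ↔ (k = j.rev) := fun k => by
    rw [eq_comm, Fin.rev_eq_iff]
  simp [w0Mat, Matrix.mul_apply, this]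

theorem adConj_w0' {E : Type*} [Field E] {n : ℕ} (b : Matrix (Fin n) (Fin n) E) :
    adConj (b * w0Mat E n) (upperTri E n) = adConj b (lowerTri E n) := by
  have hw : (w0Mat E n)⁻¹ = w0Mat E n := Matrix.inv_eq_right_inv (w0_sq' E n)
  ext M
  rw [mem_adConj', mem_adConj', Matrix.mul_inv_rev, hw]
  constructor
  · rintro ⟨U, hU, rfl⟩
    refine ⟨w0Mat E n * (U * w0Mat E n), ?_, by noncomm_ring⟩
    intro i j hij
    rw [w0_conj']
    exact hU _ _ (fun h => hij (Fin.rev_le_rev.mp h))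
  · rintro ⟨U, hU, rfl⟩
    refine ⟨w0Mat E n * (U * w0Mat E n), ?_, ?_⟩
    · intro i j hij
      rw [w0_conj']
      exact hU _ _ (fun h => hij (Fin.rev_le_rev.mp h))
    · calc _ = b * (w0Mat E n * w0Mat E n) * U * (w0Mat E n * w0Mat E n) * b⁻¹ := by noncomm_ring
        _ = _ := by rw [w0_sq']; noncomm_ring

theorem part_one' {E : Type*} [Field E] {n s : ℕ}
    (β : Fin n → Fin s) (hβmono : Monotone β)
    (b : Matrix (Fin n) (Fin n) E) (hbunit : IsUnit b.det) (hbpar : b ∈ parab E β) :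
    parab E β ⊓ adConj b (lowerTri E n) = adConj b (levi E β ⊓ lowerTri E n) := by
  have hi := parab_inv' hbunit hbpar
  ext M
  rw [Submodule.mem_inf, mem_adConj', mem_adConj']
  constructor
  · rintro ⟨hM, L, hL, rfl⟩
    refine ⟨L, ⟨?_, hL⟩, rfl⟩
    have h : L ∈ parab E β := by
      have := parab_mul' hi (parab_mul' hM hbpar)
      rwa [mul_assoc, mul_assoc, Matrix.nonsing_inv_mul _ hbunit, mul_one, ← mul_assoc,
        Matrix.nonsing_inv_mul _ hbunit, one_mul] at this
    intro i j hij
    by_cases h1 : j ≤ i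
    · exact h i j (fun h2 => hij (le_antisymm h2 (hβmono h1)))
    · exact hL i j h1
  · rintro ⟨L, ⟨hL1, hL2⟩, rfl⟩
    refine ⟨parab_mul' hbpar (parab_mul' ?_ hi), L, hL2, rfl⟩
    exact fun i j hij => hL1 i j (fun h => hij h.le)

theorem part_two' {E : Type*} [Field E] {n s : ℕ}
    (β : Fin n → Fin s) (hβmono : Monotone β)
    (b : Matrix (Fin n) (Fin n) E) (hbunit : IsUnit b.det) (hbpar : b ∈ parab E β) :
    (centerLevi E β ⊔ nilrad E β) ⊓ adConj b (lowerTri E n) = adConj b (centerLevi E β) := by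
  have hi := parab_inv' hbunit hbpar
  ext M
  rw [Submodule.mem_inf, mem_adConj', mem_adConj']
  constructor
  · rintro ⟨hM, L, hL, rfl⟩
    refine ⟨L, ?_, rfl⟩
    have h : L ∈ centerLevi E β ⊔ nilrad E β := by
      have := conj_center' (Matrix.nonsing_inv_mul _ hbunit) hi hbpar hM
      rwa [mul_assoc, mul_assoc, Matrix.nonsing_inv_mul _ hbunit, mul_one, ← mul_assoc,
        Matrix.nonsing_inv_mul _ hbunit, one_mul] at this
    obtain ⟨y, ⟨c, rfl⟩, N, hN, rfl⟩ := Submodule.mem_sup.mp h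
    have hN0 : N = 0 := by
      ext i j
      by_cases h1 : β i < β j
      · have hlt : i < j := hβmono.reflect_lt h1
        have := hL i j (not_le.mpr hlt)
        simpa [blockDiagMap, Matrix.diagonal_apply, hlt.ne] using this
      · exact hN i j h1
    rw [hN0, add_zero]
    exact ⟨c, rfl⟩
  · rintro ⟨L, hL, rfl⟩
    refine ⟨conj_center' (Matrix.mul_nonsing_inv _ hbunit) hbpar hi
      (Submodule.mem_sup_left hL), L, ?_, rfl⟩
    obtain ⟨c, rfl⟩ := hL
    intro i j hij
    exact Matrix.diagonal_apply_ne _ (fun h => hij h.ge)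

/-- Let `b ∈ GL_n(E)` be an invertible block upper-triangular matrix.  Then:
(i) `𝔭_{S_0} ∩ Ad_b(𝔟̄) = Ad_b(𝔩_{S_0} ∩ 𝔟̄)`;
(ii) `(𝔷_{S_0} + 𝔫_{S_0}) ∩ Ad_b(𝔟̄) = Ad_b(𝔷_{S_0})`.
Equivalently, for `g = b w₀` one has `𝔭_{S_0} ∩ Ad_g(𝔟) = Ad_b(𝔩_{S_0} ∩ 𝔟̄)` and
`(𝔷_{S_0} + 𝔫_{S_0}) ∩ Ad_g(𝔟) = Ad_b(𝔷_{S_0})`. -/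
theorem statement_4 (E : Type*) [Field E] (n s : ℕ) (hs : 1 ≤ s)
    (β : Fin n → Fin s) (hβmono : Monotone β) (hβsurj : Function.Surjective β)
    (b : Matrix (Fin n) (Fin n) E) (hbunit : IsUnit b.det) (hbpar : b ∈ parab E β) :
    parab E β ⊓ adConj b (lowerTri E n) = adConj b (levi E β ⊓ lowerTri E n) ∧
    (centerLevi E β ⊔ nilrad E β) ⊓ adConj b (lowerTri E n) = adConj b (centerLevi E β) ∧
    parab E β ⊓ adConj (b * w0Mat E n) (upperTri E n) = adConj b (levi E β ⊓ lowerTri E n) ∧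
    (centerLevi E β ⊔ nilrad E β) ⊓ adConj (b * w0Mat E n) (upperTri E n)
      = adConj b (centerLevi E β) := by
  rw [adConj_w0']
  exact ⟨part_one' β hβmono b hbunit hbpar, part_two' β hβmono b hbunit hbpar,
    part_one' β hβmono b hbunit hbpar, part_two' β hβmono b hbunit hbpar⟩
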